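/- Let X_t = Σ_{k=1}^∞ J_k·1_{{τ_k ≤ t}} and 𝔾 = (𝓖_t)_{t≥0} be given by the Cox construction with infinitely many jumps (with i.i.d. jump sizes (J_k) of law ν, i.i.d. Exp(1) driving variables (E_k), jump times (τ_k), and intensities (λ^k) with c ≤ λ^k ≤ C), and assume each λ^k is 𝔾-predictable. Define λ_t := Σ_{k=1}^∞ 1_{{τ_{k-1} < t ≤ τ_k}} λ^k_t. Let 𝓟 be the σ-algebra on Ω × [0,∞) generated by all sets A × {0} with A ∈ 𝓖_0 and all sets A × (s,t] with A ∈ 𝓖_s and 0 ≤ s < t. Then for every T > 0 and every (𝓟 ⊗ 𝓑(ℝ))-measurable function W : Ω × [0,∞) × ℝ → [0,∞], one has E[Σ_{k≥1 : τ_k ≤ T} W(τ_k, J_k)] = E[∫_0^T ∫_ℝ W(u, ξ) λ_u ν(dξ) du]. (Equivalently, the compensator of the jump measure of X is λ_t ν(dξ) dt.) -/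

import Mathlib

open MeasureTheory ProbabilityTheory Filter Set
open scoped ENNReal Topology

noncomputable section

namespace InvMarkovJump

variable {Ω : Type*}

/-- `F` is a filtration (for times `t ≥ 0`) of sub-σ-algebras of `m0`. -/
def IsFiltration (m0 : MeasurableSpace Ω) (F : ℝ → MeasurableSpace Ω) : Prop :=
  (∀ s t : ℝ, 0 ≤ s → s ≤ t → F s ≤ F t) ∧ ∀ t : ℝ, F t ≤ m0

/-- The right-continuous regularization `(⋂_{s > t} F s)_{t ≥ 0}` of a filtration. -/
def rcReg (F : ℝ → MeasurableSpace Ω) : ℝ → MeasurableSpace Ω :=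
  fun t => ⨅ s ∈ Set.Ioi t, F s

/-- All sample paths of `M` are right-continuous (at every time `t ≥ 0`). -/
def RCPaths (M : ℝ → Ω → ℝ) : Prop :=
  ∀ ω, ∀ t : ℝ, 0 ≤ t → ContinuousWithinAt (fun s => M s ω) (Set.Ici t) t

/-- `M` is a martingale (for times `t ≥ 0`) with respect to the filtration `F`
under the measure `μ`: it is adapted, integrable, and `E[M_t | F_s] = M_s` a.s.
for all `0 ≤ s ≤ t`. -/
def IsMartingale {m0 : MeasurableSpace Ω} (μ : Measure Ω)
    (F : ℝ → MeasurableSpace Ω) (M : ℝ → Ω → ℝ) : Prop :=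
  (∀ t : ℝ, 0 ≤ t → Integrable (M t) μ) ∧
  (∀ t : ℝ, 0 ≤ t → Measurable[F t] (M t)) ∧
  ∀ s t : ℝ, 0 ≤ s → s ≤ t → μ[M t|F s] =ᵐ[μ] M s

/-- `F` is immersed in `G`: `F ⊆ G` and every `F`-martingale (with right-continuous
sample paths) is a `G`-martingale. -/
def Immersed {m0 : MeasurableSpace Ω} (μ : Measure Ω)
    (F G : ℝ → MeasurableSpace Ω) : Prop :=
  (∀ t : ℝ, 0 ≤ t → F t ≤ G t) ∧
  ∀ M : ℝ → Ω → ℝ, RCPaths M → IsMartingale μ F M → IsMartingale μ G M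

/-- The usual conditions: the filtration is right-continuous and `F 0` contains
all `μ`-null sets. -/
def UsualConditions {m0 : MeasurableSpace Ω} (μ : Measure Ω)
    (F : ℝ → MeasurableSpace Ω) : Prop :=
  IsFiltration m0 F ∧ (∀ t : ℝ, 0 ≤ t → F t = rcReg F t) ∧
    ∀ s : Set Ω, μ s = 0 → MeasurableSet[F 0] s

/-- `E` is `Exp(1)`-distributed: `P(E > x) = e^{-x}` for all `x ≥ 0`. -/
def IsExpOne {m0 : MeasurableSpace Ω} (μ : Measure Ω) (E : Ω → ℝ) : Prop :=
  Measurable E ∧ ∀ x : ℝ, 0 ≤ x → μ {ω | x < E ω} = ENNReal.ofReal (Real.exp (-x))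

/-- `F_∞ = ⋁_{t ≥ 0} F t`. -/
def Finfty (F : ℝ → MeasurableSpace Ω) : MeasurableSpace Ω :=
  ⨆ t ∈ Set.Ici (0:ℝ), F t

/-- The natural filtration `(σ(Y_s : 0 ≤ s ≤ t))_{t ≥ 0}` of a process `Y`. -/
def natFilt {β : Type*} [MeasurableSpace β] (Y : ℝ → Ω → β) : ℝ → MeasurableSpace Ω :=
  fun t => ⨆ s ∈ Set.Icc (0:ℝ) t, MeasurableSpace.comap (Y s) inferInstance

/-- Progressive measurability of a process `u` with respect to the filtration `F`:
for every `t ≥ 0`, `(s, ω) ↦ u s ω` on `[0, t] × Ω` is `B([0,t]) ⊗ F t`-measurable. -/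
def ProgMeas (F : ℝ → MeasurableSpace Ω) (u : ℝ → Ω → ℝ) : Prop :=
  ∀ t : ℝ, 0 ≤ t →
    Measurable[MeasurableSpace.prod inferInstance (F t)]
      (fun p : Set.Icc (0:ℝ) t × Ω => u p.1 p.2)

/-- The predictable σ-algebra on `Ω × [0,∞)` associated with a filtration `G`: generated by
the sets `A × {0}` with `A ∈ G 0` and `A × (s,t]` with `A ∈ G s`, `0 ≤ s < t`. -/
def predSigma (G : ℝ → MeasurableSpace Ω) : MeasurableSpace (Ω × ℝ) :=
  MeasurableSpace.generateFrom
    {P | (∃ A : Set Ω, MeasurableSet[G 0] A ∧ P = A ×ˢ ({0} : Set ℝ)) ∨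
      (∃ (A : Set Ω) (s t : ℝ), MeasurableSet[G s] A ∧ 0 ≤ s ∧ s < t ∧
        P = A ×ˢ Set.Ioc s t)}

/-!
The compensator of a single jump at an exponential time `E` of rate one is `dy` on `(0, E]`, because
the exponential density equals its tail. The integrated intensity is a time change carrying the
deterministic level `y` to the jump time at which it is reached, and it transports `dy` to
`λ_u du` on the waiting period. Conditionally on the history `F_∞ ∨ σ(E_j, J_j : j < k)`, the pair
`(E_k, J_k)` is still a fresh exponential variable with an independent mark, so this computation
applies to the `k`-th waiting period as soon as the integrand, the intensity and the starting time
are measurable with respect to the history. For predictable processes this is true up to the next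
jump: until then the observed filtration reveals nothing beyond the history. The waiting periods
partition `(0, ∞)`, and summation over `k` gives the compensator of the whole jump measure.
-/

section IntegratedIntensity

/-- The first time after `S` at which the intensity integrated from `S` reaches the level `x`. -/
def jumpTime (lam : ℝ → ℝ) (S x : ℝ) : ℝ :=
  sInf {t : ℝ | S < t ∧ x ≤ ∫ s in Ioc S t, lam s}

/-- `lam` is an intensity after time `S`: nonnegative and locally integrable on `(S, ∞)`, with
divergent integral, so that every level is reached by the integrated intensity. -/
structure IsIntensity (lam : ℝ → ℝ) (S : ℝ) : Prop where
  nonneg : ∀ᵐ s ∂volume.restrict (Ioi S), 0 ≤ lam s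
  integrableOn : ∀ t, IntegrableOn lam (Ioc S t)
  exists_le_integral : ∀ x, ∃ t, x ≤ ∫ s in Ioc S t, lam s

variable {lam lam' : ℝ → ℝ} {c C S t x : ℝ}

lemma isIntensity_of_bounds (hc : 0 < c) (hm : Measurable lam)
    (hb : ∀ᵐ s ∂volume.restrict (Ioi S), c ≤ lam s ∧ lam s ≤ C) : IsIntensity lam S := by
  have hb_Ioc (t : ℝ) : ∀ᵐ s ∂volume.restrict (Ioc S t), c ≤ lam s ∧ lam s ≤ C :=
    ae_restrict_of_ae_restrict_of_subset Ioc_subset_Ioi_self hb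
  have hint (t : ℝ) : IntegrableOn lam (Ioc S t) :=
    Measure.integrableOn_of_bounded (M := max |c| |C|) (by simp) hm.aestronglyMeasurable <| by
      filter_upwards [hb_Ioc t] with s hs using abs_le_max_abs_abs hs.1 hs.2
  refine ⟨hb.mono fun s hs => hc.le.trans hs.1, hint, fun x => ⟨S + |x| / c, ?_⟩⟩
  calc x ≤ |x| := le_abs_self x
    _ = ∫ _ in Ioc S (S + |x| / c), c := by
      rw [setIntegral_const, Real.volume_real_Ioc_of_le (le_add_of_nonneg_right (by positivity))]
      simp [hc.ne']
    _ ≤ ∫ s in Ioc S (S + |x| / c), lam s :=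
      setIntegral_mono_ae_restrict (by simp) (hint _) ((hb_Ioc _).mono fun s hs => hs.1)

namespace IsIntensity

lemma monotone_integral (h : IsIntensity lam S) : Monotone fun t => ∫ s in Ioc S t, lam s :=
  fun _ b hab => setIntegral_mono_set (h.integrableOn b)
    (ae_restrict_of_ae_restrict_of_subset Ioc_subset_Ioi_self h.nonneg)
    (Ioc_subset_Ioc_right hab).eventuallyLE

lemma continuousOn_integral (h : IsIntensity lam S) (b : ℝ) :
    ContinuousOn (fun t => ∫ s in Ioc S t, lam s) (Icc S b) :=
  intervalIntegral.continuousOn_primitive ((integrableOn_Icc_iff_integrableOn_Ioc).2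
    (h.integrableOn b))

lemma nonempty_reached (h : IsIntensity lam S) (x : ℝ) :
    {t : ℝ | S < t ∧ x ≤ ∫ s in Ioc S t, lam s}.Nonempty := by
  obtain ⟨t, ht⟩ := h.exists_le_integral x
  exact ⟨max t (S + 1), by simp, ht.trans (h.monotone_integral (le_max_left _ _))⟩

lemma le_jumpTime (h : IsIntensity lam S) (x : ℝ) : S ≤ jumpTime lam S x :=
  le_csInf (h.nonempty_reached x) fun _ ht => ht.1.le

lemma le_integral_of_jumpTime_lt (h : IsIntensity lam S) (ht : jumpTime lam S x < t) :
    x ≤ ∫ s in Ioc S t, lam s := by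
  obtain ⟨r, hr, hrt⟩ := exists_lt_of_csInf_lt (h.nonempty_reached x) ht
  exact hr.2.trans (h.monotone_integral hrt.le)

lemma integral_lt_of_lt_jumpTime (hSt : S < t) (ht : t < jumpTime lam S x) :
    ∫ s in Ioc S t, lam s < x := by
  by_contra! hx
  exact notMem_of_lt_csInf ht ⟨S, fun _ hr => hr.1.le⟩ ⟨hSt, hx⟩

lemma le_integral_jumpTime (h : IsIntensity lam S) (x : ℝ) :
    x ≤ ∫ s in Ioc S (jumpTime lam S x), lam s := by
  have hcont : ContinuousWithinAt (fun t => ∫ s in Ioc S t, lam s)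
      (Ioc (jumpTime lam S x) (jumpTime lam S x + 1)) (jumpTime lam S x) :=
    (h.continuousOn_integral (jumpTime lam S x + 1) _ ⟨h.le_jumpTime x, by simp⟩).mono
      fun t ht => ⟨(h.le_jumpTime x).trans ht.1.le, ht.2⟩
  rw [ContinuousWithinAt, nhdsWithin_Ioc_eq_nhdsGT (by simp)] at hcont
  exact ge_of_tendsto hcont (eventually_mem_nhdsWithin.mono fun t => h.le_integral_of_jumpTime_lt)

lemma integral_jumpTime (h : IsIntensity lam S) (hx : 0 ≤ x) :
    ∫ s in Ioc S (jumpTime lam S x), lam s = x := by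
  refine le_antisymm ?_ (h.le_integral_jumpTime x)
  rcases (h.le_jumpTime x).eq_or_lt with hS | hS
  · simpa [← hS] using hx
  · have hcont := (h.continuousOn_integral _ _ (right_mem_Icc.2 (h.le_jumpTime x))).mono
      Ioo_subset_Icc_self
    rw [ContinuousWithinAt, nhdsWithin_Ioo_eq_nhdsLT hS] at hcont
    exact le_of_tendsto hcont <| mem_of_superset (Ioo_mem_nhdsLT hS) fun t ht =>
      (integral_lt_of_lt_jumpTime ht.1 ht.2).le

lemma jumpTime_le_iff (h : IsIntensity lam S) :
    jumpTime lam S x ≤ t ↔ S ≤ t ∧ x ≤ ∫ s in Ioc S t, lam s := by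
  refine ⟨fun ht => ⟨(h.le_jumpTime x).trans ht,
    (h.le_integral_jumpTime x).trans (h.monotone_integral ht)⟩, fun ⟨hSt, hx⟩ => ?_⟩
  refine le_of_forall_gt_imp_ge_of_dense fun r hr => ?_
  exact csInf_le ⟨S, fun _ hr => hr.1.le⟩ ⟨hSt.trans_lt hr, hx.trans (h.monotone_integral hr.le)⟩

lemma jumpTime_le_iff_of_pos (h : IsIntensity lam S) (hx : 0 < x) :
    jumpTime lam S x ≤ t ↔ x ≤ ∫ s in Ioc S t, lam s := by
  refine h.jumpTime_le_iff.trans (and_iff_right_of_imp fun hxt => ?_)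
  by_contra! ht
  simp [Ioc_eq_empty ht.le.not_gt, hx.not_ge] at hxt

lemma lt_jumpTime (h : IsIntensity lam S) (hx : 0 < x) : S < jumpTime lam S x := by
  rw [← not_le, h.jumpTime_le_iff_of_pos hx]
  simpa using hx

lemma jumpTime_congr (h : IsIntensity lam S) (h' : IsIntensity lam' S)
    (heq : lam =ᵐ[volume.restrict (Ioc S (jumpTime lam S x))] lam') :
    jumpTime lam S x = jumpTime lam' S x := by
  have hint {t : ℝ} (ht : t ≤ jumpTime lam S x) :
      ∫ s in Ioc S t, lam s = ∫ s in Ioc S t, lam' s :=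
    integral_congr_ae (ae_restrict_of_ae_restrict_of_subset (Ioc_subset_Ioc_right ht) heq)
  have hle : jumpTime lam' S x ≤ jumpTime lam S x :=
    h'.jumpTime_le_iff.2 ⟨h.le_jumpTime x, (h.le_integral_jumpTime x).trans_eq (hint le_rfl)⟩
  refine le_antisymm (h.jumpTime_le_iff.2 ⟨h'.le_jumpTime x, ?_⟩) hle
  exact (h'.le_integral_jumpTime x).trans_eq (hint hle).symm

lemma measurable_jumpTime (h : IsIntensity lam S) : Measurable (jumpTime lam S) :=
  Monotone.measurable fun _ y hxy => h.jumpTime_le_iff.2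
    ⟨h.le_jumpTime y, hxy.trans (h.le_integral_jumpTime y)⟩

lemma map_jumpTime (h : IsIntensity lam S) (hx : 0 ≤ x) :
    (volume.restrict (Ioc 0 x)).map (jumpTime lam S) =
      (volume.restrict (Ioc S (jumpTime lam S x))).withDensity fun u => ENNReal.ofReal (lam u) := by
  refine Measure.ext_of_Iic _ _ fun t => ?_
  have hpre : jumpTime lam S ⁻¹' Iic t ∩ Ioc 0 x = Ioc 0 (min (∫ s in Ioc S t, lam s) x) := by
    ext y
    simp only [mem_inter_iff, mem_preimage, mem_Iic, mem_Ioc, le_min_iff]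
    refine ⟨fun ⟨hy, hy0, hyx⟩ => ⟨hy0, (h.jumpTime_le_iff_of_pos hy0).1 hy, hyx⟩,
      fun ⟨hy0, hy, hyx⟩ => ⟨(h.jumpTime_le_iff_of_pos hy0).2 hy, hy0, hyx⟩⟩
  have hnonneg : 0 ≤ᵐ[volume.restrict (Ioc S (min t (jumpTime lam S x)))] lam :=
    ae_restrict_of_ae_restrict_of_subset Ioc_subset_Ioi_self h.nonneg
  rw [Measure.map_apply h.measurable_jumpTime measurableSet_Iic,
    Measure.restrict_apply (h.measurable_jumpTime measurableSet_Iic), hpre, Real.volume_Ioc,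
    sub_zero, withDensity_apply _ measurableSet_Iic, Measure.restrict_restrict measurableSet_Iic,
    inter_comm, Ioc_inter_Iic, min_comm (jumpTime lam S x),
    ← ofReal_integral_eq_lintegral_ofReal (h.integrableOn _) hnonneg,
    h.monotone_integral.map_min, h.integral_jumpTime hx]

lemma setLIntegral_comp_jumpTime (h : IsIntensity lam S) (hx : 0 ≤ x) {g : ℝ → ℝ≥0∞}
    (hg : Measurable g) :
    ∫⁻ y in Ioc 0 x, g (jumpTime lam S y) =
      ∫⁻ u in Ioc S (jumpTime lam S x), g u * ENNReal.ofReal (lam u) := by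
  rw [← lintegral_map hg h.measurable_jumpTime, h.map_jumpTime hx,
    lintegral_withDensity_eq_lintegral_mul₀ (h.integrableOn _).aemeasurable.ennreal_ofReal
      hg.aemeasurable]
  simp only [Pi.mul_apply, mul_comm]

end IsIntensity

end IntegratedIntensity

section Exponential

variable {r x : ℝ}

lemma expMeasure_Ici (hr : 0 < r) (hx : 0 ≤ x) :
    expMeasure r (Ici x) = ENNReal.ofReal (Real.exp (-(r * x))) := by
  have := isProbabilityMeasure_expMeasure hr
  have hIoi : expMeasure r (Ici x) = expMeasure r (Ioi x) :=
    measure_congr ((withDensity_absolutelyContinuous _ _).ae_eq Ioi_ae_eq_Ici.symm)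
  rw [hIoi, ← compl_Iic, ← ofReal_measureReal, probReal_compl_eq_one_sub measurableSet_Iic,
    ← cdf_eq_real, cdf_expMeasure_eq hr, if_pos hx, sub_sub_cancel]

lemma ae_nonneg_expMeasure (hr : 0 < r) : ∀ᵐ x ∂expMeasure r, 0 ≤ x := by
  have := isProbabilityMeasure_expMeasure hr
  exact (prob_compl_eq_zero_iff measurableSet_Ici).2 (by simp [expMeasure_Ici hr le_rfl])

/-- A jump at an exponential time of rate `r` has compensator `r dy` up to that time. -/
lemma lintegral_expMeasure (hr : 0 < r) {h : ℝ → ℝ≥0∞} (hh : Measurable h) :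
    ∫⁻ x, h x ∂expMeasure r =
      ENNReal.ofReal r * ∫⁻ x, (∫⁻ y in Ioc 0 x, h y) ∂expMeasure r := by
  have := isProbabilityMeasure_expMeasure hr
  have htail {y : ℝ} (hy : 0 < y) : exponentialPDF r y * h y =
      ENNReal.ofReal r * ∫⁻ x, (Ici y).indicator (fun _ => h y) x ∂expMeasure r := by
    rw [lintegral_indicator_const measurableSet_Ici, expMeasure_Ici hr hy.le,
      exponentialPDF_of_nonneg hy.le, ENNReal.ofReal_mul hr.le, mul_assoc, mul_comm (h y)]
  have hsupp : (fun y => exponentialPDF r y * h y).support ⊆ Ici 0 := fun y hy => by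
    by_contra hy0
    exact hy (by simp only [exponentialPDF_of_neg (not_le.1 hy0), zero_mul])
  have hmeas : Measurable fun p : ℝ × ℝ => (Ici p.1).indicator (fun _ => h p.1) p.2 :=
    (hh.comp measurable_fst).indicator (measurableSet_le measurable_fst measurable_snd)
  calc ∫⁻ x, h x ∂expMeasure r
    _ = ∫⁻ y, exponentialPDF r y * h y :=
      lintegral_withDensity_eq_lintegral_mul _ (measurable_exponentialPDFReal r).ennreal_ofReal hh
    _ = ∫⁻ y in Ioi 0, exponentialPDF r y * h y := by
      rw [setLIntegral_congr Ioi_ae_eq_Ici, setLIntegral_eq_of_support_subset hsupp]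
    _ = ENNReal.ofReal r *
          ∫⁻ y in Ioi 0, ∫⁻ x, (Ici y).indicator (fun _ => h y) x ∂expMeasure r := by
      rw [← lintegral_const_mul' _ _ ENNReal.ofReal_ne_top]
      exact setLIntegral_congr_fun measurableSet_Ioi fun y hy => htail hy
    _ = ENNReal.ofReal r * ∫⁻ x, (∫⁻ y in Ioi 0, (Iic x).indicator h y) ∂expMeasure r :=
      congrArg _ (lintegral_lintegral_swap hmeas.aemeasurable)
    _ = ENNReal.ofReal r * ∫⁻ x, (∫⁻ y in Ioc 0 x, h y) ∂expMeasure r := by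
      simp only [setLIntegral_indicator measurableSet_Iic, Iic_inter_Ioi]

section IsExpOne

variable {m0 : MeasurableSpace Ω} {μ : Measure Ω} [IsProbabilityMeasure μ] {E : Ω → ℝ}

lemma IsExpOne.ae_pos (hE : IsExpOne μ E) : ∀ᵐ ω ∂μ, 0 < E ω :=
  (prob_compl_eq_zero_iff (measurableSet_lt measurable_const hE.1)).2 (by simpa using hE.2 0 le_rfl)

lemma IsExpOne.map_eq (hE : IsExpOne μ E) : μ.map E = expMeasure 1 := by
  have := isProbabilityMeasure_expMeasure one_pos
  have := Measure.isProbabilityMeasure_map (μ := μ) hE.1.aemeasurable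
  refine Measure.eq_of_cdf _ _ (StieltjesFunction.ext fun x => ?_)
  rw [cdf_expMeasure_eq one_pos, cdf_eq_real, map_measureReal_apply hE.1 measurableSet_Iic]
  split_ifs with hx
  · have hcompl : E ⁻¹' Iic x = {ω | x < E ω}ᶜ := by ext; simp
    rw [hcompl, probReal_compl_eq_one_sub (measurableSet_lt measurable_const hE.1),
      measureReal_def, hE.2 x hx, ENNReal.toReal_ofReal (Real.exp_pos _).le, one_mul]
  · refine (measureReal_eq_zero_iff).2 (measure_mono_null (fun ω hω => ?_) hE.ae_pos)
    exact not_lt.2 (hω.trans (not_le.1 hx).le)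

end IsExpOne

lemma IsIntensity.lintegral_jumpTime {lam : ℝ → ℝ} {S : ℝ} (h : IsIntensity lam S) {g : ℝ → ℝ≥0∞}
    (hg : Measurable g) :
    ∫⁻ x, g (jumpTime lam S x) ∂expMeasure 1 =
      ∫⁻ x, (∫⁻ u in Ioc S (jumpTime lam S x), g u * ENNReal.ofReal (lam u)) ∂expMeasure 1 := by
  refine (lintegral_expMeasure one_pos (hg.comp h.measurable_jumpTime)).trans ?_
  rw [ENNReal.ofReal_one, one_mul]
  refine lintegral_congr_ae ?_
  filter_upwards [ae_nonneg_expMeasure one_pos] with x hx using h.setLIntegral_comp_jumpTime hx hg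

end Exponential

section JointMeasurability

variable {α : Type*} {mα : MeasurableSpace α} {a b : α → ℝ}

lemma measurableSet_mem_Ioc (ha : Measurable a) (hb : Measurable b) :
    MeasurableSet {p : α × ℝ | p.2 ∈ Ioc (a p.1) (b p.1)} :=
  (measurableSet_lt (ha.comp measurable_fst) measurable_snd).inter
    (measurableSet_le measurable_snd (hb.comp measurable_fst))

lemma measurable_setLIntegral_Ioc (ha : Measurable a) (hb : Measurable b) {f : α × ℝ → ℝ≥0∞}
    (hf : Measurable f) : Measurable fun w => ∫⁻ u in Ioc (a w) (b w), f (w, u) := by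
  simp only [← lintegral_indicator measurableSet_Ioc]
  exact (hf.indicator (measurableSet_mem_Ioc ha hb)).lintegral_prod_right'

lemma measurable_setIntegral_Ioc (ha : Measurable a) (hb : Measurable b) {f : α × ℝ → ℝ}
    (hf : Measurable f) : Measurable fun w => ∫ u in Ioc (a w) (b w), f (w, u) := by
  simp only [← integral_indicator measurableSet_Ioc]
  exact (hf.indicator (measurableSet_mem_Ioc ha hb)).stronglyMeasurable.integral_prod_right'
    |>.measurable

lemma measurable_jumpTime {lam : α × ℝ → ℝ} {S x : α → ℝ} (hlam : Measurable lam)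
    (hS : Measurable S) (hx : Measurable x) (h : ∀ w, IsIntensity (fun s => lam (w, s)) (S w)) :
    Measurable fun w => jumpTime (fun s => lam (w, s)) (S w) (x w) := by
  refine measurable_of_Iic fun t => ?_
  simp only [preimage, mem_Iic, (h _).jumpTime_le_iff]
  exact (measurableSet_le hS measurable_const).inter
    (measurableSet_le hx (measurable_setIntegral_Ioc hS measurable_const hlam))

end JointMeasurability

section SingleJump

variable {Ω' 𝕏 : Type*} {m' : MeasurableSpace Ω'} [MeasurableSpace 𝕏] {lam : Ω' × ℝ → ℝ}
  {S : Ω' → ℝ} {W : (Ω' × ℝ) × 𝕏 → ℝ≥0∞}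

lemma measurable_jump (hlam : Measurable lam) (hS : Measurable S)
    (h : ∀ w, IsIntensity (fun s => lam (w, s)) (S w)) (hW : Measurable W) :
    Measurable fun q : Ω' × ℝ × 𝕏 =>
      W ((q.1, jumpTime (fun s => lam (q.1, s)) (S q.1) q.2.1), q.2.2) := by
  have hjump := measurable_jumpTime (lam := fun p : (Ω' × ℝ × 𝕏) × ℝ => lam (p.1.1, p.2))
    (hlam.comp (by fun_prop)) (hS.comp measurable_fst) measurable_snd.fst fun q => h q.1
  exact hW.comp ((measurable_fst.prodMk hjump).prodMk measurable_snd.snd)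

lemma measurable_compensator (hlam : Measurable lam) (hS : Measurable S)
    (h : ∀ w, IsIntensity (fun s => lam (w, s)) (S w)) (hW : Measurable W) (ν : Measure 𝕏)
    [SFinite ν] :
    Measurable fun q : Ω' × ℝ => ∫⁻ u in Ioc (S q.1) (jumpTime (fun s => lam (q.1, s)) (S q.1) q.2),
      (∫⁻ ξ, W ((q.1, u), ξ) ∂ν) * ENNReal.ofReal (lam (q.1, u)) := by
  have hjump := measurable_jumpTime (lam := fun p : (Ω' × ℝ) × ℝ => lam (p.1.1, p.2))
    (hlam.comp (by fun_prop)) (hS.comp measurable_fst) measurable_snd fun q => h q.1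
  refine measurable_setLIntegral_Ioc (hS.comp measurable_fst) hjump
    (f := fun p => (∫⁻ ξ, W ((p.1.1, p.2), ξ) ∂ν) * ENNReal.ofReal (lam (p.1.1, p.2))) ?_
  exact (hW.lintegral_prod_right'.mul hlam.ennreal_ofReal).comp
    (measurable_fst.fst.prodMk measurable_snd)

theorem lintegral_jump_of_indepFun {m0 : MeasurableSpace Ω} {μ : Measure Ω} [IsProbabilityMeasure μ]
    {π : Ω → Ω'} {E : Ω → ℝ} {J : Ω → 𝕏} (hπ : Measurable π) (hE : Measurable E)
    (hJ : Measurable J) (hindep : IndepFun π (fun ω => (E ω, J ω)) μ) (hEJ : IndepFun E J μ)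
    (hexp : μ.map E = expMeasure 1) (hlam : Measurable lam) (hS : Measurable S)
    (h : ∀ w, IsIntensity (fun s => lam (w, s)) (S w)) (hW : Measurable W) :
    ∫⁻ ω, W ((π ω, jumpTime (fun s => lam (π ω, s)) (S (π ω)) (E ω)), J ω) ∂μ =
      ∫⁻ ω, (∫⁻ u in Ioc (S (π ω)) (jumpTime (fun s => lam (π ω, s)) (S (π ω)) (E ω)),
        (∫⁻ ξ, W ((π ω, u), ξ) ∂μ.map J) * ENNReal.ofReal (lam (π ω, u))) ∂μ := by
  have := isProbabilityMeasure_expMeasure one_pos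
  have := Measure.isProbabilityMeasure_map (μ := μ) hJ.aemeasurable
  have := Measure.isProbabilityMeasure_map (μ := μ) hπ.aemeasurable
  have hlawE : μ.map (fun ω => (π ω, E ω)) = (μ.map π).prod (expMeasure 1) := by
    rw [← hexp]
    exact (indepFun_iff_map_prod_eq_prod_map_map hπ.aemeasurable hE.aemeasurable).1
      (hindep.comp measurable_id measurable_fst)
  have hlawEJ : μ.map (fun ω => (π ω, E ω, J ω)) =
      (μ.map π).prod ((expMeasure 1).prod (μ.map J)) := by
    rw [← hexp, ← (indepFun_iff_map_prod_eq_prod_map_map hE.aemeasurable hJ.aemeasurable).1 hEJ]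
    exact (indepFun_iff_map_prod_eq_prod_map_map hπ.aemeasurable (hE.prodMk hJ).aemeasurable).1
      hindep
  have hL := measurable_jump hlam hS h hW
  have hR := measurable_compensator hlam hS h hW (μ.map J)
  refine (lintegral_map hL (hπ.prodMk (hE.prodMk hJ))).symm.trans
    (Eq.trans ?_ (lintegral_map hR (hπ.prodMk hE)))
  rw [hlawE, hlawEJ, lintegral_prod _ hL.aemeasurable, lintegral_prod _ hR.aemeasurable]
  refine lintegral_congr fun w => ?_
  refine (lintegral_prod _ (hL.comp measurable_prodMk_left).aemeasurable).trans ?_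
  exact (h w).lintegral_jumpTime
    (hW.lintegral_prod_right'.comp (measurable_prodMk_left (x := w)))

end SingleJump

section Trace

/-- The trace of the σ-algebra `P` on the set `D` is coarser than that of `Q`: on `D`, every
`P`-measurable set coincides with a `Q`-measurable one. -/
def CoarserOn {X : Type*} (D : Set X) (P Q : MeasurableSpace X) : Prop :=
  P.comap (Subtype.val : D → X) ≤ Q.comap Subtype.val

variable {X : Type*} {D : Set X} {P Q : MeasurableSpace X}

lemma CoarserOn.exists_measurable_eqOn (h : CoarserOn D P Q) {Z : Type*} [Nonempty Z]
    [MeasurableSpace Z] [StandardBorelSpace Z] {f : X → Z} (hf : Measurable[P] f) :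
    ∃ f' : X → Z, Measurable[Q] f' ∧ EqOn f' f D := by
  have hfD : Measurable[Q.comap Subtype.val] fun d : D => f d :=
    (hf.comp (comap_measurable Subtype.val)).mono h le_rfl
  obtain ⟨f', hf', heq⟩ := hfD.exists_eq_measurable_comp
  exact ⟨f', hf', fun p hp => (congrFun heq ⟨p, hp⟩).symm⟩

lemma CoarserOn.prod (h : CoarserOn D P Q) {Y : Type*} (R : MeasurableSpace Y) :
    CoarserOn (Prod.fst ⁻¹' D : Set (X × Y)) (P.prod R) (Q.prod R) := by
  have hfst : (Prod.fst ∘ Subtype.val : (Prod.fst ⁻¹' D : Set (X × Y)) → X) =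
    (Subtype.val : D → X) ∘ fun q => ⟨q.1.1, q.2⟩ := rfl
  simp only [CoarserOn, MeasurableSpace.prod, MeasurableSpace.comap_sup,
    MeasurableSpace.comap_comp, hfst]
  refine sup_le_sup_right ?_ _
  simpa only [← MeasurableSpace.comap_comp] using MeasurableSpace.comap_mono h

end Trace

section Predictable

variable {F G : ℝ → MeasurableSpace Ω} {T : ℝ}

lemma measurable_prodMk_left_predSigma (ω : Ω) :
    Measurable[inferInstance, predSigma G] fun s : ℝ => (ω, s) := by
  classical
  refine measurable_generateFrom ?_
  rintro _ (⟨A, -, rfl⟩ | ⟨A, s, t, -, -, -, rfl⟩) <;> rw [mk_preimage_prod_right_eq_if]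
  · exact .ite' (fun _ => measurableSet_singleton 0) fun _ => .empty
  · exact .ite' (fun _ => measurableSet_Ioc) fun _ => .empty

lemma measurableSet_snd_le_predSigma (hT : 0 ≤ T) :
    MeasurableSet[predSigma G] {p : Ω × ℝ | p.2 ≤ T} := by
  have hcompl : {p : Ω × ℝ | p.2 ≤ T}ᶜ = ⋃ n : ℕ, univ ×ˢ Ioc T (T + (n + 1)) := by
    ext ⟨ω, u⟩
    obtain ⟨n, hn⟩ := exists_nat_ge (u - T)
    simp only [mem_compl_iff, mem_ofPred_eq, not_le, mem_iUnion, mem_prod, mem_univ, mem_Ioc,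
      true_and, exists_and_left, iff_self_and]
    exact fun _ => ⟨n, by linarith⟩
  refine MeasurableSet.of_compl (hcompl ▸ .iUnion fun n => ?_)
  exact MeasurableSpace.measurableSet_generateFrom
    (Or.inr ⟨univ, T, T + (n + 1), .univ, hT, lt_add_of_pos_right _ (by positivity), rfl⟩)

/-- A generator `A ×ˢ Ioc s t` with `A` in `rcReg F s` is probed only at times `u > s`, where `A`
can be replaced by the limit inferior of `H`-measurable traces of `A` taken at `s + 1 / (n + 1)`. -/
lemma coarserOn_predSigma_rcReg {H : MeasurableSpace Ω} {Ω₀ : Set Ω} {θ : Ω → ℝ}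
    (hF : ∀ r, 0 < r → CoarserOn {ω | ω ∈ Ω₀ ∧ r < θ ω} (F r) H) :
    CoarserOn {p : Ω × ℝ | p.1 ∈ Ω₀ ∧ p.2 ∈ Ioc 0 (θ p.1)} (predSigma (rcReg F))
      (H.prod inferInstance) := by
  rw [CoarserOn, predSigma, MeasurableSpace.comap_generateFrom]
  refine MeasurableSpace.generateFrom_le ?_
  rintro _ ⟨P, (⟨A, -, rfl⟩ | ⟨A, s, t, hA, hs, -, rfl⟩), rfl⟩
  · refine ⟨∅, @MeasurableSet.empty _ _, ?_⟩
    ext ⟨p, hp⟩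
    simp [hp.2.1.ne']
  have hlim : Tendsto (fun n : ℕ => s + 1 / ((n : ℝ) + 1)) atTop (𝓝 s) := by
    simpa using tendsto_one_div_add_atTop_nhds_zero_nat.const_add s
  have htrace (n : ℕ) : ∃ A' : Set Ω, MeasurableSet[H] A' ∧
      ∀ ω ∈ Ω₀, s + 1 / ((n : ℝ) + 1) < θ ω → (ω ∈ A' ↔ ω ∈ A) := by
    have hs_lt : s < s + 1 / ((n : ℝ) + 1) := lt_add_of_pos_right _ (by positivity)
    have hA' : MeasurableSet[F (s + 1 / ((n : ℝ) + 1))] A :=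
      (iInf₂_le (f := fun r (_ : r ∈ Ioi s) => F r) _ hs_lt) _ hA
    obtain ⟨A', hA'meas, hA'eq⟩ := hF _ (hs.trans_lt hs_lt) _ ⟨A, hA', rfl⟩
    exact ⟨A', hA'meas, fun ω hω hθ => Set.ext_iff.1 hA'eq ⟨ω, hω, hθ⟩⟩
  choose A' hA'meas hA' using htrace
  refine ⟨liminf A' atTop ×ˢ Ioc s t,
    (MeasurableSet.measurableSet_liminf hA'meas).prod measurableSet_Ioc, ?_⟩
  ext ⟨⟨ω, u⟩, hω, -, hu⟩
  simp only [mem_preimage, mem_prod, and_congr_left_iff, mem_liminf_iff_eventually_mem]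
  rintro ⟨hsu, -⟩
  have hev : ∀ᶠ n in atTop, (ω ∈ A' n ↔ ω ∈ A) :=
    (hlim.eventually_lt_const (hsu.trans_le hu)).mono fun n => hA' n ω hω
  rw [eventually_congr hev, eventually_const]

end Predictable

lemma tsum_setLIntegral_Ioc_mul_ofReal {t : ℕ → ℝ} (ht : Monotone t) (f : ℝ → ℝ≥0∞)
    (l : ℕ → ℝ → ℝ) :
    ∑' k, ∫⁻ u in Ioc (t k) (t (k + 1)), f u * ENNReal.ofReal (l k u) =
      ∫⁻ u in Ioi (t 0),
        f u * ENNReal.ofReal (∑' k, if t k < u ∧ u ≤ t (k + 1) then l k u else 0) := by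
  set g : ℝ → ℝ := fun u => ∑' k, if t k < u ∧ u ≤ t (k + 1) then l k u else 0 with hg
  have hdisj := ht.pairwise_disjoint_on_Ioc_succ
  have hg_eq (k : ℕ) {u : ℝ} (hu : u ∈ Ioc (t k) (t (k + 1))) : g u = l k u := by
    refine (tsum_eq_single k fun j hjk => if_neg fun hj => ?_).trans (if_pos hu)
    exact disjoint_left.1 (hdisj hjk) hj hu
  have hsupp : (fun u => f u * ENNReal.ofReal (g u)).support ⊆ ⋃ k, Ioc (t k) (t (k + 1)) := by
    refine fun u hu => by_contra fun hnot => hu ?_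
    simp only [mem_iUnion, not_exists, mem_Ioc] at hnot
    simp [hg, hnot]
  have hsub : ⋃ k, Ioc (t k) (t (k + 1)) ⊆ Ioi (t 0) :=
    iUnion_subset fun k u hu => (ht k.zero_le).trans_lt hu.1
  calc ∑' k, ∫⁻ u in Ioc (t k) (t (k + 1)), f u * ENNReal.ofReal (l k u)
    _ = ∑' k, ∫⁻ u in Ioc (t k) (t (k + 1)), f u * ENNReal.ofReal (g u) :=
      tsum_congr fun k => setLIntegral_congr_fun measurableSet_Ioc fun u hu => by
        simp only [hg_eq k hu]
    _ = ∫⁻ u in ⋃ k, Ioc (t k) (t (k + 1)), f u * ENNReal.ofReal (g u) :=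
      (lintegral_iUnion (fun _ => measurableSet_Ioc) hdisj _).symm
    _ = ∫⁻ u in Ioi (t 0), f u * ENNReal.ofReal (g u) := by
      rw [setLIntegral_eq_of_support_subset hsupp,
        setLIntegral_eq_of_support_subset (hsupp.trans hsub)]

section Cox

variable {𝕏 : Type*} [MeasurableSpace 𝕏]

/-- The observed filtration: the right-continuous regularization of `F` enlarged by the processes
`J i 1_{τ (i + 1) ≤ s}`. As in the construction, the `i`-th mark `J i` belongs to the jump time
`τ (i + 1)`. -/
abbrev coxFiltration [Zero 𝕏] (F : ℝ → MeasurableSpace Ω) (J : ℕ → Ω → 𝕏) (τ : ℕ → Ω → ℝ) :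
    ℝ → MeasurableSpace Ω :=
  rcReg fun t => F t ⊔ ⨆ i, natFilt (fun s ω => if τ (i + 1) ω ≤ s then J i ω else 0) t

/-- The σ-algebras of the independent sources of randomness: the exponential variables, the marks,
and the background information `F_∞`. -/
abbrev source (F : ℝ → MeasurableSpace Ω) (E : ℕ → Ω → ℝ) (J : ℕ → Ω → 𝕏) :
    ℕ ⊕ ℕ ⊕ Unit → MeasurableSpace Ω :=
  fun i => Sum.elim (fun k => MeasurableSpace.comap (E k) inferInstance)
    (Sum.elim (fun k => MeasurableSpace.comap (J k) inferInstance) fun _ => Finfty F) i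

/-- The information `F_∞ ∨ σ(E j, J j : j < k)` that determines everything up to the start of the
`k`-th waiting period. -/
abbrev history (F : ℝ → MeasurableSpace Ω) (E : ℕ → Ω → ℝ) (J : ℕ → Ω → 𝕏) (k : ℕ) :
    MeasurableSpace Ω :=
  ⨆ i ∈ {i | Sum.elim (· < k) (Sum.elim (· < k) fun _ => True) i}, source F E J i

/-- The Cox construction with infinitely many jumps, for marks in an arbitrary measurable space with
a distinguished point. Indices start at `0`: `lam k`, `E k` and `J k` belong to the waiting period
from `τ k` to `τ (k + 1)`. -/
structure IsCoxConstruction [Zero 𝕏] {m0 : MeasurableSpace Ω} (μ : Measure Ω)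
    (F : ℝ → MeasurableSpace Ω) (c C : ℝ) (lam : ℕ → ℝ → Ω → ℝ) (E : ℕ → Ω → ℝ) (J : ℕ → Ω → 𝕏)
    (τ : ℕ → Ω → ℝ) : Prop where
  Finfty_le : Finfty F ≤ m0
  lower_pos : 0 < c
  bounds : ∀ k, ∀ᵐ p ∂μ.prod (volume.restrict (Ici 0)), c ≤ lam k p.2 p.1 ∧ lam k p.2 p.1 ≤ C
  isExpOne : ∀ k, IsExpOne μ (E k)
  measurable_mark : ∀ k, Measurable (J k)
  indep : iIndep (source F E J) μ
  zero : ∀ ω, τ 0 ω = 0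
  succ : ∀ k ω, τ (k + 1) ω = jumpTime (fun s => lam k s ω) (τ k ω) (E k ω)
  predictable : ∀ k, Measurable[predSigma (coxFiltration F J τ)] fun p : Ω × ℝ => lam k p.2 p.1

/-- The event that all exponential variables are positive and all intensities stay within the
bounds `c` and `C`. It has probability one and there every waiting period is nonempty and ends, so
that the infimum in `jumpTime` never takes its junk value. -/
def regularEvent (c C : ℝ) (lam : ℕ → ℝ → Ω → ℝ) (E : ℕ → Ω → ℝ) : Set Ω :=
  {ω | ∀ k, 0 < E k ω ∧ ∀ᵐ s ∂volume.restrict (Ici 0), c ≤ lam k s ω ∧ lam k s ω ≤ C}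

section History

variable {F : ℝ → MeasurableSpace Ω} {E : ℕ → Ω → ℝ} {J : ℕ → Ω → 𝕏} {j k : ℕ}

lemma history_mono : Monotone (history F E J) := fun j k hjk => by
  refine biSup_mono ?_
  rintro (i | i | i) hi
  · exact lt_of_lt_of_le (show i < j from hi) hjk
  · exact lt_of_lt_of_le (show i < j from hi) hjk
  · trivial

lemma Finfty_le_history : Finfty F ≤ history F E J k :=
  le_iSup₂_of_le (Sum.inr (Sum.inr ())) trivial le_rfl

lemma measurable_history_exp (hjk : j < k) : Measurable[history F E J k] (E j) :=
  measurable_iff_comap_le.2 (le_iSup₂_of_le (Sum.inl j) hjk le_rfl)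

lemma measurable_history_mark (hjk : j < k) : Measurable[history F E J k] (J j) :=
  measurable_iff_comap_le.2 (le_iSup₂_of_le (Sum.inr (Sum.inl j)) hjk le_rfl)

end History

namespace IsCoxConstruction

variable [Zero 𝕏] {m0 : MeasurableSpace Ω} {μ : Measure Ω} {F : ℝ → MeasurableSpace Ω} {c C : ℝ}
  {lam : ℕ → ℝ → Ω → ℝ} {E : ℕ → Ω → ℝ} {J : ℕ → Ω → 𝕏} {τ : ℕ → Ω → ℝ} {ω : Ω}

lemma source_le (h : IsCoxConstruction μ F c C lam E J τ) : ∀ i, source F E J i ≤ m0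
  | Sum.inl k => (h.isExpOne k).1.comap_le
  | Sum.inr (Sum.inl k) => (h.measurable_mark k).comap_le
  | Sum.inr (Sum.inr _) => h.Finfty_le

lemma history_le (h : IsCoxConstruction μ F c C lam E J τ) (k : ℕ) : history F E J k ≤ m0 :=
  iSup₂_le fun i _ => h.source_le i

lemma indepFun_exp_mark (h : IsCoxConstruction μ F c C lam E J τ) (k : ℕ) :
    IndepFun (E k) (J k) μ :=
  (IndepFun_iff_Indep _ _ _).2 (h.indep.indep (i := Sum.inl k) (j := Sum.inr (Sum.inl k)) (by simp))

lemma indep_history (h : IsCoxConstruction μ F c C lam E J τ) (k : ℕ) :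
    Indep (history F E J k)
      (MeasurableSpace.comap (fun ω => (E k ω, J k ω)) inferInstance) μ := by
  have hdisj : Disjoint {i : ℕ ⊕ ℕ ⊕ Unit | Sum.elim (· < k) (Sum.elim (· < k) fun _ => True) i}
      {Sum.inl k, Sum.inr (Sum.inl k)} := by
    rw [Set.disjoint_right]
    rintro i (rfl | rfl) <;> exact lt_irrefl k
  refine indep_of_indep_of_le_right (indep_iSup_of_disjoint h.source_le h.indep hdisj) ?_
  refine measurable_iff_comap_le.1 (Measurable.prodMk ?_ ?_) <;> rw [measurable_iff_comap_le]
  · exact le_iSup₂_of_le (Sum.inl k) (by simp) le_rfl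
  · exact le_iSup₂_of_le (Sum.inr (Sum.inl k)) (by simp) le_rfl

lemma measurable_intensity (h : IsCoxConstruction μ F c C lam E J τ) (k : ℕ) (ω : Ω) :
    Measurable fun s => lam k s ω :=
  (h.predictable k).comp (measurable_prodMk_left_predSigma ω)

lemma ae_mem_regularEvent [IsProbabilityMeasure μ] (h : IsCoxConstruction μ F c C lam E J τ) :
    ∀ᵐ ω ∂μ, ω ∈ regularEvent c C lam E :=
  ae_all_iff.2 fun k => (h.isExpOne k).ae_pos.and (Measure.ae_ae_of_ae_prod (h.bounds k))

lemma isIntensity (h : IsCoxConstruction μ F c C lam E J τ) (hω : ω ∈ regularEvent c C lam E)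
    (k : ℕ) {S : ℝ} (hS : 0 ≤ S) : IsIntensity (fun s => lam k s ω) S :=
  isIntensity_of_bounds h.lower_pos (h.measurable_intensity k ω)
    (ae_restrict_of_ae_restrict_of_subset (fun _ hs => hS.trans (mem_Ioi.1 hs).le) (hω k).2)

lemma nonneg (h : IsCoxConstruction μ F c C lam E J τ) (hω : ω ∈ regularEvent c C lam E) (k : ℕ) :
    0 ≤ τ k ω := by
  induction k with
  | zero => exact (h.zero ω).ge
  | succ k ih => exact h.succ k ω ▸ ih.trans ((h.isIntensity hω k ih).le_jumpTime _)

lemma strictMono (h : IsCoxConstruction μ F c C lam E J τ) (hω : ω ∈ regularEvent c C lam E) :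
    StrictMono fun k => τ k ω :=
  strictMono_nat_of_lt_succ fun k =>
    h.succ k ω ▸ (h.isIntensity hω k (h.nonneg hω k)).lt_jumpTime (hω k).1

/-- Before `τ (k + 1)` only the marks of index `< k` have been revealed. -/
lemma coarserOn_history (h : IsCoxConstruction μ F c C lam E J τ) {k : ℕ}
    (hver : ∀ j ≤ k, ∃ S, Measurable[history F E J j] S ∧ EqOn S (τ j) (regularEvent c C lam E)) :
    CoarserOn {p : Ω × ℝ | p.1 ∈ regularEvent c C lam E ∧ p.2 ∈ Ioc 0 (τ (k + 1) p.1)}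
      (predSigma (coxFiltration F J τ)) ((history F E J k).prod inferInstance) := by
  refine coarserOn_predSigma_rcReg fun r hr => ?_
  rw [CoarserOn, MeasurableSpace.comap_le_iff_le_map]
  refine sup_le ?_ (iSup_le fun i => iSup₂_le fun s hs => ?_) <;>
    rw [← MeasurableSpace.comap_le_iff_le_map]
  · refine MeasurableSpace.comap_mono ?_
    exact (le_iSup₂_of_le (f := fun t (_ : t ∈ Ici (0 : ℝ)) => F t) r hr.le le_rfl).trans
      Finfty_le_history
  rw [MeasurableSpace.comap_comp, ← measurable_iff_comap_le]
  rcases lt_or_ge i k with hik | hki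
  · obtain ⟨S, hS, hSτ⟩ := hver (i + 1) hik
    have hmeas : Measurable[history F E J k] fun ω => if S ω ≤ s then J i ω else 0 :=
      Measurable.ite ((hS.mono (history_mono hik) le_rfl) measurableSet_Iic)
        (measurable_history_mark hik) measurable_const
    convert hmeas.comp (comap_measurable Subtype.val) using 1
    ext ω
    simp [hSτ ω.2.1]
  · convert measurable_const (a := (0 : 𝕏)) using 1
    ext ω
    have hτ : s < τ (i + 1) ω :=
      hs.2.trans_lt (ω.2.2.trans_le ((h.strictMono ω.2.1).monotone (by gcongr)))
    simp [hτ.not_ge]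

lemma exists_intensity_version (h : IsCoxConstruction μ F c C lam E J τ) {k : ℕ}
    (hver : ∀ j ≤ k, ∃ S, Measurable[history F E J j] S ∧ EqOn S (τ j) (regularEvent c C lam E)) :
    ∃ (S : Ω → ℝ) (lam' : Ω × ℝ → ℝ), Measurable[history F E J k] S ∧
      Measurable[(history F E J k).prod inferInstance] lam' ∧
      (∀ ω, IsIntensity (fun s => lam' (ω, s)) (S ω)) ∧
      ∀ ω ∈ regularEvent c C lam E, S ω = τ k ω ∧
        jumpTime (fun s => lam' (ω, s)) (S ω) (E k ω) = τ (k + 1) ω ∧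
        ∀ᵐ s ∂volume.restrict (Ioc (τ k ω) (τ (k + 1) ω)), lam' (ω, s) = lam k s ω := by
  obtain ⟨S, hS, hSτ⟩ := hver k le_rfl
  obtain ⟨l, hl, hl_eq⟩ := (h.coarserOn_history hver).exists_measurable_eqOn (h.predictable k)
  have hclamp : Measurable fun x : ℝ => max c (min C x) := by fun_prop
  have hint (ω : Ω) : IsIntensity (fun s => max c (min C (l (ω, s)))) (S ω) :=
    isIntensity_of_bounds (C := max c C) h.lower_pos
      (hclamp.comp (hl.comp (@measurable_prodMk_left _ _ (history F E J k) _ ω)))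
      (ae_of_all _ fun s => ⟨le_max_left _ _, max_le_max_left _ (min_le_left _ _)⟩)
  refine ⟨S, fun p => max c (min C (l p)), hS, hclamp.comp hl, hint, fun ω hω => ?_⟩
  have hsub : Ioc (τ k ω) (τ (k + 1) ω) ⊆ Ici 0 := fun s hs => (h.nonneg hω k).trans hs.1.le
  have hae : ∀ᵐ s ∂volume.restrict (Ioc (τ k ω) (τ (k + 1) ω)),
      max c (min C (l (ω, s))) = lam k s ω := by
    filter_upwards [ae_restrict_of_ae_restrict_of_subset hsub (hω k).2,
      ae_restrict_mem measurableSet_Ioc] with s hb hs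
    rw [hl_eq (x := (ω, s)) ⟨hω, (h.nonneg hω k).trans_lt hs.1, hs.2⟩, min_eq_right hb.2,
      max_eq_right hb.1]
  refine ⟨hSτ hω, ?_, hae⟩
  rw [h.succ] at hae ⊢
  rw [hSτ hω]
  exact ((h.isIntensity hω k (h.nonneg hω k)).jumpTime_congr (hSτ hω ▸ hint ω)
    (hae.mono fun s hs => hs.symm)).symm

lemma exists_jumpTime_version (h : IsCoxConstruction μ F c C lam E J τ) (k : ℕ) :
    ∃ S, Measurable[history F E J k] S ∧ EqOn S (τ k) (regularEvent c C lam E) := by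
  induction k using Nat.strong_induction_on with
  | _ k ih =>
    rcases k with _ | k
    · exact ⟨fun _ => 0, measurable_const, fun ω _ => (h.zero ω).symm⟩
    obtain ⟨S, lam', hS, hlam', hint, hver⟩ :=
      h.exists_intensity_version fun j hj => ih j (Nat.lt_succ_of_le hj)
    have hle : history F E J k ≤ history F E J (k + 1) := history_mono k.le_succ
    exact ⟨fun ω => jumpTime (fun s => lam' (ω, s)) (S ω) (E k ω),
      measurable_jumpTime
        (hlam'.mono (sup_le_sup_right (MeasurableSpace.comap_mono hle) _) le_rfl)
        (hS.mono hle le_rfl) (measurable_history_exp k.lt_succ_self) hint,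
      fun ω hω => (hver ω hω).2.1⟩

variable [IsProbabilityMeasure μ] {W : (Ω × ℝ) × 𝕏 → ℝ≥0∞}

lemma exists_history_version (h : IsCoxConstruction μ F c C lam E J τ) (k : ℕ)
    (hW : Measurable[(predSigma (coxFiltration F J τ)).prod inferInstance] W) (ν : Measure 𝕏) :
    ∃ (S : Ω → ℝ) (lam' : Ω × ℝ → ℝ) (W' : (Ω × ℝ) × 𝕏 → ℝ≥0∞), Measurable[history F E J k] S ∧
      Measurable[(history F E J k).prod inferInstance] lam' ∧
      Measurable[((history F E J k).prod inferInstance).prod inferInstance] W' ∧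
      (∀ ω, IsIntensity (fun s => lam' (ω, s)) (S ω)) ∧
      (∀ᵐ ω ∂μ, W' ((ω, jumpTime (fun s => lam' (ω, s)) (S ω) (E k ω)), J k ω) =
        W ((ω, τ (k + 1) ω), J k ω)) ∧
      ∀ᵐ ω ∂μ, ∫⁻ u in Ioc (S ω) (jumpTime (fun s => lam' (ω, s)) (S ω) (E k ω)),
          (∫⁻ ξ, W' ((ω, u), ξ) ∂ν) * ENNReal.ofReal (lam' (ω, u)) =
        ∫⁻ u in Ioc (τ k ω) (τ (k + 1) ω),
          (∫⁻ ξ, W ((ω, u), ξ) ∂ν) * ENNReal.ofReal (lam k u ω) := by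
  have hver (j : ℕ) (_ : j ≤ k) := h.exists_jumpTime_version j
  obtain ⟨S, lam', hS, hlam', hint, hSlam⟩ := h.exists_intensity_version hver
  obtain ⟨W', hW', hW'_eq⟩ := ((h.coarserOn_history hver).prod _).exists_measurable_eqOn hW
  refine ⟨S, lam', W', hS, hlam', hW', hint, ?_, ?_⟩ <;>
    filter_upwards [h.ae_mem_regularEvent] with ω hω <;>
    obtain ⟨hSω, hjump, hlam'_eq⟩ := hSlam ω hω
  · rw [hjump]
    exact hW'_eq ⟨hω, (h.nonneg hω k).trans_lt (h.strictMono hω k.lt_succ_self), le_rfl⟩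
  · rw [hjump, hSω]
    refine lintegral_congr_ae ?_
    filter_upwards [hlam'_eq, ae_restrict_mem measurableSet_Ioc] with u hu hmem
    have hWu (ξ : 𝕏) : W' ((ω, u), ξ) = W ((ω, u), ξ) :=
      hW'_eq ⟨hω, (h.nonneg hω k).trans_lt hmem.1, hmem.2⟩
    simp only [hu, hWu]

theorem lintegral_jump (h : IsCoxConstruction μ F c C lam E J τ) (k : ℕ)
    (hW : Measurable[(predSigma (coxFiltration F J τ)).prod inferInstance] W) :
    AEMeasurable (fun ω => W ((ω, τ (k + 1) ω), J k ω)) μ ∧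
      AEMeasurable (fun ω => ∫⁻ u in Ioc (τ k ω) (τ (k + 1) ω),
        (∫⁻ ξ, W ((ω, u), ξ) ∂μ.map (J k)) * ENNReal.ofReal (lam k u ω)) μ ∧
      ∫⁻ ω, W ((ω, τ (k + 1) ω), J k ω) ∂μ =
        ∫⁻ ω, (∫⁻ u in Ioc (τ k ω) (τ (k + 1) ω),
          (∫⁻ ξ, W ((ω, u), ξ) ∂μ.map (J k)) * ENNReal.ofReal (lam k u ω)) ∂μ := by
  obtain ⟨S, lam', W', hS, hlam', hW', hint, hjump, hcomp⟩ :=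
    h.exists_history_version k hW (μ.map (J k))
  have hE := (h.isExpOne k).1
  have hJ := h.measurable_mark k
  have hid : Measurable[m0, history F E J k] fun ω : Ω => ω := measurable_id'' (h.history_le k)
  have hindep : @IndepFun _ _ _ _ (history F E J k) _ (fun ω : Ω => ω)
      (fun ω => (E k ω, J k ω)) μ :=
    (@IndepFun_iff_Indep _ _ _ _ (history F E J k) _ _ _ _).2
      ((MeasurableSpace.comap_id (m := history F E J k)).symm ▸ h.indep_history k)
  have := Measure.isProbabilityMeasure_map (μ := μ) hJ.aemeasurable
  refine ⟨⟨_, (measurable_jump hlam' hS hint hW').comp (hid.prodMk (hE.prodMk hJ)),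
      hjump.mono fun _ => Eq.symm⟩,
    ⟨_, (measurable_compensator hlam' hS hint hW' (μ.map (J k))).comp (hid.prodMk hE),
      hcomp.mono fun _ => Eq.symm⟩, ?_⟩
  rw [← lintegral_congr_ae hjump, ← lintegral_congr_ae hcomp]
  exact lintegral_jump_of_indepFun hid hE hJ hindep (h.indepFun_exp_mark k)
    (h.isExpOne k).map_eq hlam' hS hint hW'

theorem lintegral_tsum_jump (h : IsCoxConstruction μ F c C lam E J τ) {ν : Measure 𝕏}
    (hν : ∀ k, μ.map (J k) = ν)
    (hW : Measurable[(predSigma (coxFiltration F J τ)).prod inferInstance] W) :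
    ∫⁻ ω, ∑' k, W ((ω, τ (k + 1) ω), J k ω) ∂μ =
      ∫⁻ ω, (∫⁻ u in Ioi 0, (∫⁻ ξ, W ((ω, u), ξ) ∂ν) *
        ENNReal.ofReal (∑' k, if τ k ω < u ∧ u ≤ τ (k + 1) ω then lam k u ω else 0)) ∂μ := by
  rw [lintegral_tsum fun k => (h.lintegral_jump k hW).1,
    tsum_congr fun k => (h.lintegral_jump k hW).2.2,
    ← lintegral_tsum fun k => (h.lintegral_jump k hW).2.1]
  refine lintegral_congr_ae ?_
  filter_upwards [h.ae_mem_regularEvent] with ω hω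
  simp only [hν]
  rw [tsum_setLIntegral_Ioc_mul_ofReal (h.strictMono hω).monotone
    (fun u => ∫⁻ ξ, W ((ω, u), ξ) ∂ν) fun k u => lam k u ω, h.zero]

end IsCoxConstruction

theorem cox_compensator_general [Zero 𝕏] {m0 : MeasurableSpace Ω} {μ : Measure Ω}
    [IsProbabilityMeasure μ] {F : ℝ → MeasurableSpace Ω} {c C : ℝ} {lam : ℕ → ℝ → Ω → ℝ}
    {E : ℕ → Ω → ℝ} {J : ℕ → Ω → 𝕏} {τ : ℕ → Ω → ℝ}
    (h : IsCoxConstruction μ F c C lam E J τ) {ν : Measure 𝕏} (hν : ∀ k, μ.map (J k) = ν)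
    {W : (Ω × ℝ) × 𝕏 → ℝ≥0∞}
    (hW : Measurable[(predSigma (coxFiltration F J τ)).prod inferInstance] W) {T : ℝ}
    (hT : 0 ≤ T) :
    ∫⁻ ω, ∑' k, (if τ (k + 1) ω ≤ T then W ((ω, τ (k + 1) ω), J k ω) else 0) ∂μ =
      ∫⁻ ω, (∫⁻ u in Ioc 0 T, (∫⁻ ξ, W ((ω, u), ξ) ∂ν) *
        ENNReal.ofReal (∑' k, if τ k ω < u ∧ u ≤ τ (k + 1) ω then lam k u ω else 0)) ∂μ := by
  have hW_T : Measurable[(predSigma (coxFiltration F J τ)).prod inferInstance]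
      fun q : (Ω × ℝ) × 𝕏 => if q.1.2 ≤ T then W q else 0 :=
    Measurable.ite (@measurable_fst _ _ (predSigma _) _ _ (measurableSet_snd_le_predSigma hT)) hW
      measurable_const
  refine (h.lintegral_tsum_jump hν hW_T).trans (lintegral_congr fun ω => ?_)
  rw [← Iic_inter_Ioi, ← setLIntegral_indicator measurableSet_Iic]
  congr 1 with u
  by_cases hu : u ≤ T <;> simp [hu]

end Cox

/-- In the Cox construction with infinitely many jumps, if each `λ^k` is
`Gi`-predictable, then the compensator of the jump measure of `X` is `λ_t ν(dξ) dt`, where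
`ν` is the law of `J_1` and `λ_t = Σ_k 1_{τ_{k-1} < t ≤ τ_k} λ^k_t`: for every `T > 0` and
every nonnegative `𝓟 ⊗ B(ℝ)`-measurable `W`,
`E[Σ_{k : τ_k ≤ T} W(τ_k, J_k)] = E[∫_0^T ∫_ℝ W(u,ξ) λ_u ν(dξ) du]`. -/
theorem cox_compensator {m0 : MeasurableSpace Ω} (μ : Measure Ω) [IsProbabilityMeasure μ]
    (F : ℝ → MeasurableSpace Ω) (hUC : UsualConditions μ F)
    (c C : ℝ) (hc : 0 < c) (hcC : c < C)
    (lam : ℕ → ℝ → Ω → ℝ)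
    (hlam_bdd : ∀ k : ℕ, ∀ᵐ p ∂(μ.prod (volume.restrict (Set.Ici (0:ℝ)))),
      c ≤ lam k p.2 p.1 ∧ lam k p.2 p.1 ≤ C)
    (E J : ℕ → Ω → ℝ)
    (hE : ∀ k, IsExpOne μ (E k))
    (hJmeas : ∀ k, Measurable (J k)) (hJint : ∀ k, Integrable (J k) μ)
    (hJid : ∀ k, Measure.map (J k) μ = Measure.map (J 0) μ)
    (hJnonvanish : ∀ k, μ {ω | J k ω ≠ 0} = 1)
    (hindep : iIndep (fun i : ℕ ⊕ ℕ ⊕ Unit =>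
      Sum.elim (fun k => MeasurableSpace.comap (E k) inferInstance)
        (Sum.elim (fun k => MeasurableSpace.comap (J k) inferInstance)
          (fun _ => Finfty F)) i) μ)
    (τ : ℕ → Ω → ℝ)
    (hτ0 : ∀ ω, τ 0 ω = 0)
    (hτ : ∀ (k : ℕ) (ω : Ω), τ (k + 1) ω =
      sInf {t : ℝ | τ k ω < t ∧ E k ω ≤ ∫ s in Set.Ioc (τ k ω) t, lam k s ω})
    (Gi : ℝ → MeasurableSpace Ω)
    (hGi : Gi = rcReg (fun t => F t ⊔
      ⨆ i : ℕ, natFilt (fun s ω => if τ (i + 1) ω ≤ s then J i ω else 0) t))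
    (hpred : ∀ k : ℕ, Measurable[predSigma Gi] (fun p : Ω × ℝ => lam k p.2 p.1))
    (W : (Ω × ℝ) × ℝ → ℝ≥0∞)
    (hW : Measurable[MeasurableSpace.prod (predSigma Gi) inferInstance] W) :
    ∀ T : ℝ, 0 < T →
      ∫⁻ ω, ∑' k : ℕ, (if τ (k + 1) ω ≤ T then W ((ω, τ (k + 1) ω), J k ω) else 0) ∂μ =
      ∫⁻ ω, (∫⁻ u in Set.Ioc 0 T,
          (∫⁻ ξ, W ((ω, u), ξ) ∂(Measure.map (J 0) μ)) *
            ENNReal.ofReal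
              (∑' k : ℕ, if τ k ω < u ∧ u ≤ τ (k + 1) ω then lam k u ω else 0)) ∂μ := by
  subst hGi
  have hcox : IsCoxConstruction μ F c C lam E J τ :=
    ⟨iSup₂_le fun t _ => hUC.1.2 t, hc, hlam_bdd, hE, hJmeas, hindep, hτ0, hτ, hpred⟩
  exact fun T hT => cox_compensator_general hcox hJid hW hT.le

end InvMarkovJump
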